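/- For every n ∈ ℕ there exist a nonnegative function w_n ∈ C_0^∞(ℝ²) with support in [-2,2]² and a C^∞ vector field u_n: ℝ² → ℝ² with support in [-2,2]² such that Δw_n = div u_n in the sense of distributions, ‖w_n‖_∞ ≤ 2/n, ‖u_n‖_{L¹} ≤ 3/n, and ∫_{ℝ²} |∇w_n| dx ≥ 1. -/

import Mathlib

open MeasureTheory Real

noncomputable section

/-- First partial derivative (with respect to the first coordinate) on `ℝ²`. -/
def pd1 (f : ℝ × ℝ → ℝ) (p : ℝ × ℝ) : ℝ := fderiv ℝ f p (1, 0)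

/-- Second partial derivative (with respect to the second coordinate) on `ℝ²`. -/
def pd2 (f : ℝ × ℝ → ℝ) (p : ℝ × ℝ) : ℝ := fderiv ℝ f p (0, 1)

/-- Test functions: smooth compactly supported functions on `ℝ²`. -/
def IsTest (φ : ℝ × ℝ → ℝ) : Prop := ContDiff ℝ (⊤ : ℕ∞) φ ∧ HasCompactSupport φ

/-- Euclidean magnitude of a vector in `ℝ²`. -/
def emag (v : ℝ × ℝ) : ℝ := Real.sqrt (v.1 ^ 2 + v.2 ^ 2)

/-! ### Basic calculus of the two partial derivatives -/

lemma pd1_contDiff {f : ℝ × ℝ → ℝ} (hf : ContDiff ℝ (⊤ : ℕ∞) f) :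
    ContDiff ℝ (⊤ : ℕ∞) (pd1 f) := by
  have h : ContDiff ℝ (⊤ : ℕ∞) (fderiv ℝ f) := hf.fderiv_right (by simp)
  exact h.clm_apply contDiff_const

lemma pd2_contDiff {f : ℝ × ℝ → ℝ} (hf : ContDiff ℝ (⊤ : ℕ∞) f) :
    ContDiff ℝ (⊤ : ℕ∞) (pd2 f) := by
  have h : ContDiff ℝ (⊤ : ℕ∞) (fderiv ℝ f) := hf.fderiv_right (by simp)
  exact h.clm_apply contDiff_const

lemma pd1_tsupport (f : ℝ × ℝ → ℝ) : tsupport (pd1 f) ⊆ tsupport f :=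
  tsupport_fderiv_apply_subset ℝ _

lemma pd2_tsupport (f : ℝ × ℝ → ℝ) : tsupport (pd2 f) ⊆ tsupport f :=
  tsupport_fderiv_apply_subset ℝ _

lemma smooth_diff {f : ℝ × ℝ → ℝ} (hf : ContDiff ℝ (⊤ : ℕ∞) f) : Differentiable ℝ f :=
  hf.differentiable (by simp)

lemma pd_comm {f : ℝ × ℝ → ℝ} (hf : ContDiff ℝ (⊤ : ℕ∞) f) : pd1 (pd2 f) = pd2 (pd1 f) := by
  have h : Differentiable ℝ (fderiv ℝ f) :=
    (hf.fderiv_right (m := (⊤ : ℕ∞)) (by simp)).differentiable (by simp)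
  funext p
  have hs : IsSymmSndFDerivAt ℝ f p := (hf.contDiffAt).isSymmSndFDerivAt (by
    simp only [minSmoothness_of_isRCLikeNormedField]; exact WithTop.coe_le_coe.2 (le_top : (2 : ℕ∞) ≤ ⊤))
  unfold pd1 pd2
  rw [fderiv_clm_apply (h p) (by fun_prop), fderiv_clm_apply (h p) (by fun_prop)]
  simpa using hs (1, 0) (0, 1)

lemma ibp {f g : ℝ × ℝ → ℝ} (hf : ContDiff ℝ (⊤ : ℕ∞) f) (hc : HasCompactSupport f)
    (hg : ContDiff ℝ (⊤ : ℕ∞) g) (v : ℝ × ℝ) :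
    ∫ p, f p * fderiv ℝ g p v = - ∫ p, fderiv ℝ f p v * g p := by
  have hf' : Continuous (fun p => fderiv ℝ f p v) :=
    ((hf.fderiv_right (m := (⊤ : ℕ∞)) (by simp)).clm_apply contDiff_const).continuous
  have hg' : Continuous (fun p => fderiv ℝ g p v) :=
    ((hg.fderiv_right (m := (⊤ : ℕ∞)) (by simp)).clm_apply contDiff_const).continuous
  apply integral_mul_fderiv_eq_neg_fderiv_mul_of_integrable
  · exact (hf'.mul hg.continuous).integrable_of_hasCompactSupport (hc.fderiv_apply ℝ v).mul_right
  · exact (hf.continuous.mul hg').integrable_of_hasCompactSupport hc.mul_right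
  · exact (hf.continuous.mul hg.continuous).integrable_of_hasCompactSupport hc.mul_right
  · exact fun x _ => smooth_diff hf x
  · exact fun x _ => smooth_diff hg x

lemma cs_int {f g : ℝ × ℝ → ℝ} (hf : ContDiff ℝ (⊤ : ℕ∞) f) (hc : HasCompactSupport f)
    (hg : ContDiff ℝ (⊤ : ℕ∞) g) : Integrable (fun p => f p * g p) :=
  (hf.continuous.mul hg.continuous).integrable_of_hasCompactSupport hc.mul_right

lemma pd1_cs {f : ℝ × ℝ → ℝ} (hc : HasCompactSupport f) : HasCompactSupport (pd1 f) :=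
  hc.fderiv_apply ℝ _

lemma pd2_cs {f : ℝ × ℝ → ℝ} (hc : HasCompactSupport f) : HasCompactSupport (pd2 f) :=
  hc.fderiv_apply ℝ _

lemma int4 {a b c d : ℝ × ℝ → ℝ} (ha : Integrable a) (hb : Integrable b) (hc : Integrable c)
    (hd : Integrable d) :
    ∫ p, (a p + b p + c p + d p) = (∫ p, a p) + (∫ p, b p) + (∫ p, c p) + ∫ p, d p := by
  have h1 : Integrable (fun p => a p + b p) := ha.add hb
  have h2 : Integrable (fun p => a p + b p + c p) := h1.add hc
  rw [integral_add h2 hd, integral_add h1 hc, integral_add ha hb]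

/-- The weak equation for `w = ∂₁G + δχ`, `u = (ΔG + δ∂₁χ, δ∂₂χ)`. -/
lemma weak_eq {G K φ : ℝ × ℝ → ℝ} (hG : ContDiff ℝ (⊤ : ℕ∞) G) (cG : HasCompactSupport G)
    (hK : ContDiff ℝ (⊤ : ℕ∞) K) (cK : HasCompactSupport K) (hφ : ContDiff ℝ (⊤ : ℕ∞) φ) :
    ∫ p, (pd1 G p + K p) * (pd1 (pd1 φ) p + pd2 (pd2 φ) p)
      = - ∫ p, fderiv ℝ φ p (pd1 (pd1 G) p + pd2 (pd2 G) p + pd1 K p, pd2 K p) := by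
  have e : ∀ p, fderiv ℝ φ p (pd1 (pd1 G) p + pd2 (pd2 G) p + pd1 K p, pd2 K p)
      = pd1 (pd1 G) p * pd1 φ p + pd2 (pd2 G) p * pd1 φ p + pd1 K p * pd1 φ p
        + pd2 K p * pd2 φ p := by
    intro p
    have : ∀ a b : ℝ, ((a, b) : ℝ × ℝ) = a • ((1 : ℝ), (0 : ℝ)) + b • ((0 : ℝ), (1 : ℝ)) := by
      intro a b; simp
    rw [this, map_add, map_smul, map_smul]
    simp only [pd1, pd2, smul_eq_mul]
    ring
  have e2 : ∀ p, (pd1 G p + K p) * (pd1 (pd1 φ) p + pd2 (pd2 φ) p)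
      = pd1 G p * pd1 (pd1 φ) p + pd1 G p * pd2 (pd2 φ) p + K p * pd1 (pd1 φ) p
        + K p * pd2 (pd2 φ) p := by intro p; ring
  simp_rw [e, e2]
  have h1 := pd1_contDiff hφ
  have h2 := pd2_contDiff hφ
  have g1 := pd1_contDiff hG
  have g2 := pd2_contDiff hG
  have i1 := cs_int g1 (pd1_cs cG) (pd1_contDiff h1)
  have i2 := cs_int g1 (pd1_cs cG) (pd2_contDiff h2)
  have i3 := cs_int hK cK (pd1_contDiff h1)
  have i4 := cs_int hK cK (pd2_contDiff h2)
  have j1 := cs_int (pd1_contDiff g1) (pd1_cs (pd1_cs cG)) h1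
  have j2 := cs_int (pd2_contDiff g2) (pd2_cs (pd2_cs cG)) h1
  have j3 := cs_int (pd1_contDiff hK) (pd1_cs cK) h1
  have j4 := cs_int (pd2_contDiff hK) (pd2_cs cK) h2
  have k1 : ∫ p, pd1 G p * pd1 (pd1 φ) p = - ∫ p, pd1 (pd1 G) p * pd1 φ p :=
    ibp g1 (pd1_cs cG) h1 (1, 0)
  have k2 : ∫ p, pd1 G p * pd2 (pd2 φ) p = - ∫ p, pd2 (pd2 G) p * pd1 φ p := by
    have a1 : ∫ p, pd1 G p * pd2 (pd2 φ) p = - ∫ p, pd2 (pd1 G) p * pd2 φ p :=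
      ibp g1 (pd1_cs cG) h2 (0, 1)
    have a2 : ∫ p, pd2 G p * pd1 (pd2 φ) p = - ∫ p, pd1 (pd2 G) p * pd2 φ p :=
      ibp g2 (pd2_cs cG) h2 (1, 0)
    have a3 : ∫ p, pd2 G p * pd2 (pd1 φ) p = - ∫ p, pd2 (pd2 G) p * pd1 φ p :=
      ibp g2 (pd2_cs cG) h1 (0, 1)
    rw [a1, ← a3, ← pd_comm hG, ← pd_comm hφ, a2]
  have k3 : ∫ p, K p * pd1 (pd1 φ) p = - ∫ p, pd1 K p * pd1 φ p := ibp hK cK h1 (1, 0)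
  have k4 : ∫ p, K p * pd2 (pd2 φ) p = - ∫ p, pd2 K p * pd2 φ p := ibp hK cK h2 (0, 1)
  rw [int4 i1 i2 i3 i4, int4 j1 j2 j3 j4, k1, k2, k3, k4]
  ring

/-- Lower bound of the mixed derivative by a point value. -/
lemma mixed_lower {H : ℝ × ℝ → ℝ} (hH : ContDiff ℝ (⊤ : ℕ∞) H) (cH : HasCompactSupport H)
    {R : ℝ} (hR : 0 < R) (hs : ∀ p : ℝ × ℝ, (R ≤ p.1 ∨ R ≤ p.2) → p ∉ tsupport H) :
    |H (0, 0)| ≤ ∫ p, |pd2 (pd1 H) p| := by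
  have h1 := pd1_contDiff hH
  have h2 := pd2_contDiff h1
  have i2 : Integrable (pd2 (pd1 H)) :=
    h2.continuous.integrable_of_hasCompactSupport (pd2_cs (pd1_cs cH))
  have key : ∫ p in (Set.Ioc 0 R) ×ˢ (Set.Ioc 0 R), pd2 (pd1 H) p = H (0, 0) := by
    rw [Measure.volume_eq_prod, setIntegral_prod _ (by
      rw [← Measure.volume_eq_prod]; exact i2.integrableOn)]
    have inner : ∀ x : ℝ, ∫ y in Set.Ioc 0 R, pd2 (pd1 H) (x, y) = - pd1 H (x, 0) := by
      intro x
      rw [← intervalIntegral.integral_of_le hR.le]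
      have hd : ∀ y ∈ Set.uIcc 0 R, HasDerivAt (fun y => pd1 H (x, y)) (pd2 (pd1 H) (x, y)) y := by
        intro y _
        exact ((smooth_diff h1 (x, y)).hasFDerivAt).comp_hasDerivAt y
          ((hasDerivAt_const y x).prodMk (hasDerivAt_id y))
      rw [intervalIntegral.integral_eq_sub_of_hasDerivAt hd
        ((h2.continuous.comp (by fun_prop : Continuous fun y : ℝ => (x, y))).intervalIntegrable _ _)]
      have : pd1 H (x, R) = 0 := image_eq_zero_of_notMem_tsupport
        (fun h => hs (x, R) (Or.inr le_rfl) (pd1_tsupport H h))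
      rw [this]; ring
    simp_rw [inner]
    rw [integral_neg, ← intervalIntegral.integral_of_le hR.le]
    have hd : ∀ y ∈ Set.uIcc 0 R, HasDerivAt (fun y => H (y, 0)) (pd1 H (y, 0)) y := by
      intro y _
      exact ((smooth_diff hH (y, 0)).hasFDerivAt).comp_hasDerivAt y
        ((hasDerivAt_id y).prodMk (hasDerivAt_const y (0 : ℝ)))
    rw [intervalIntegral.integral_eq_sub_of_hasDerivAt hd
        ((h1.continuous.comp (by fun_prop : Continuous fun y : ℝ => (y, (0 : ℝ)))).intervalIntegrable
          _ _)]
    have : H (R, 0) = 0 := image_eq_zero_of_notMem_tsupport (hs (R, 0) (Or.inl le_rfl))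
    rw [this]; ring
  rw [← key]
  refine (abs_integral_le_integral_abs).trans ?_
  exact setIntegral_le_integral i2.abs (Filter.Eventually.of_forall fun _ => abs_nonneg _)

/-! ### The logarithmic profile -/

/-- Smooth function equal to `-t` for `t ≤ -1` and to `0` for `t ≥ 0`. -/
def prof (t : ℝ) : ℝ := -t * Real.smoothTransition (-t)

lemma prof_contDiff : ContDiff ℝ (⊤ : ℕ∞) prof := by
  have h : ContDiff ℝ (⊤ : ℕ∞) Real.smoothTransition := Real.smoothTransition.contDiff
  exact contDiff_neg.mul (h.comp contDiff_neg)

lemma prof_low {t : ℝ} (ht : t ≤ -1) : prof t = -t := by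
  unfold prof; rw [Real.smoothTransition.one_of_one_le (by linarith)]; ring

lemma prof_high {t : ℝ} (ht : 0 ≤ t) : prof t = 0 := by
  unfold prof; rw [Real.smoothTransition.zero_of_nonpos (by linarith)]; ring

lemma prof_d_low {t : ℝ} (ht : t < -1) : deriv prof t = -1 := by
  have : prof =ᶠ[nhds t] fun t => -t := by
    filter_upwards [Iio_mem_nhds ht] with s hs using prof_low (le_of_lt hs)
  rw [this.deriv_eq]; simp

lemma prof_d_high {t : ℝ} (ht : 0 < t) : deriv prof t = 0 := by
  have : prof =ᶠ[nhds t] fun t => 0 := by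
    filter_upwards [Ioi_mem_nhds ht] with s hs using prof_high (le_of_lt hs)
  rw [this.deriv_eq]; simp

lemma prof_dd_low {t : ℝ} (ht : t < -1) : deriv (deriv prof) t = 0 := by
  have : deriv prof =ᶠ[nhds t] fun t => -1 := by
    filter_upwards [Iio_mem_nhds ht] with s hs using prof_d_low hs
  rw [this.deriv_eq]; simp

lemma prof_dd_high {t : ℝ} (ht : 0 < t) : deriv (deriv prof) t = 0 := by
  have : deriv prof =ᶠ[nhds t] fun t => 0 := by
    filter_upwards [Ioi_mem_nhds ht] with s hs using prof_d_high hs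
  rw [this.deriv_eq]; simp

lemma prof_d_contDiff : ContDiff ℝ (⊤ : ℕ∞) (deriv prof) :=
  prof_contDiff.iterate_deriv 1

lemma prof_dd_cont : Continuous (deriv (deriv prof)) :=
  (prof_contDiff.iterate_deriv 2).continuous

lemma prof_bound : ∃ C : ℝ, 0 < C ∧ (∀ t, |deriv prof t| ≤ C) ∧
    (∀ t, |deriv (deriv prof) t| ≤ C) := by
  obtain ⟨A, hA⟩ := (isCompact_Icc (a := (-1 : ℝ)) (b := 0)).exists_bound_of_continuousOn
    prof_d_contDiff.continuous.continuousOn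
  obtain ⟨B, hB⟩ := (isCompact_Icc (a := (-1 : ℝ)) (b := 0)).exists_bound_of_continuousOn
    prof_dd_cont.continuousOn
  refine ⟨1 + |A| + |B|, by positivity, fun t => ?_, fun t => ?_⟩
  · have := abs_nonneg A
    have := abs_nonneg B
    rcases lt_or_ge t (-1) with h | h
    · rw [prof_d_low h, abs_neg, abs_one]; linarith
    rcases lt_or_ge 0 t with h' | h'
    · rw [prof_d_high h']; simp; positivity
    have := hA t ⟨h, h'⟩
    rw [Real.norm_eq_abs] at this
    linarith [le_abs_self A]
  · have := abs_nonneg A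
    have := abs_nonneg B
    rcases lt_or_ge t (-1) with h | h
    · rw [prof_dd_low h]; simp; positivity
    rcases lt_or_ge 0 t with h' | h'
    · rw [prof_dd_high h']; simp; positivity
    have := hB t ⟨h, h'⟩
    rw [Real.norm_eq_abs] at this
    linarith [le_abs_self B]

/-- The smoothed, truncated logarithm. -/
def HT (T : ℝ) (p : ℝ × ℝ) : ℝ := prof (Real.log (1 + p.1 ^ 2 + p.2 ^ 2) - T)

lemma spos (x y : ℝ) : 0 < 1 + x ^ 2 + y ^ 2 := by positivity

lemma HT_contDiff (T : ℝ) : ContDiff ℝ (⊤ : ℕ∞) (HT T) := by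
  refine prof_contDiff.comp (ContDiff.sub (ContDiff.log ?_ ?_) contDiff_const)
  · fun_prop
  · exact fun p => (spos p.1 p.2).ne'

lemma pd1_eq {f : ℝ × ℝ → ℝ} (hf : ContDiff ℝ (⊤ : ℕ∞) f) {x y d : ℝ}
    (h : HasDerivAt (fun t => f (t, y)) d x) : pd1 f (x, y) = d := by
  have h1 : HasDerivAt (fun t => f (t, y)) (pd1 f (x, y)) x :=
    ((smooth_diff hf (x, y)).hasFDerivAt).comp_hasDerivAt x
      ((hasDerivAt_id x).prodMk (hasDerivAt_const x y))
  exact h1.unique h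

lemma pd2_eq {f : ℝ × ℝ → ℝ} (hf : ContDiff ℝ (⊤ : ℕ∞) f) {x y d : ℝ}
    (h : HasDerivAt (fun t => f (x, t)) d y) : pd2 f (x, y) = d := by
  have h1 : HasDerivAt (fun t => f (x, t)) (pd2 f (x, y)) y :=
    ((smooth_diff hf (x, y)).hasFDerivAt).comp_hasDerivAt y
      ((hasDerivAt_const y x).prodMk (hasDerivAt_id y))
  exact h1.unique h

/-- One-variable computation. -/
lemma line_d {A A' : ℝ → ℝ} (hA : ∀ t, HasDerivAt A (A' t) t) (T c x : ℝ) (hc : 0 < c) :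
    HasDerivAt (fun t => A (Real.log (c + t ^ 2) - T))
      (A' (Real.log (c + x ^ 2) - T) * (2 * x / (c + x ^ 2))) x := by
  have hs : c + x ^ 2 ≠ 0 := by positivity
  have h1 : HasDerivAt (fun t : ℝ => c + t ^ 2) (2 * x) x := by
    simpa using ((hasDerivAt_id x).pow 2).const_add c
  exact (hA _).comp x ((h1.log hs).sub_const T)

lemma line_q (c x : ℝ) (hc : 0 < c) :
    HasDerivAt (fun t : ℝ => 2 * t / (c + t ^ 2))
      ((2 * (c + x ^ 2) - 2 * x * (2 * x)) / (c + x ^ 2) ^ 2) x := by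
  have hs : c + x ^ 2 ≠ 0 := by positivity
  have h1 : HasDerivAt (fun t : ℝ => c + t ^ 2) (2 * x) x := by
    simpa using ((hasDerivAt_id x).pow 2).const_add c
  have h2 : HasDerivAt (fun t : ℝ => 2 * t) 2 x := by
    simpa using (hasDerivAt_id x).const_mul (2 : ℝ)
  exact h2.div h1 hs

lemma prof_has (t : ℝ) : HasDerivAt prof (deriv prof t) t :=
  (prof_contDiff.differentiable (by simp) t).hasDerivAt

lemma prof_d_has (t : ℝ) : HasDerivAt (deriv prof) (deriv (deriv prof) t) t :=
  (prof_d_contDiff.differentiable (by simp) t).hasDerivAt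

lemma HT_lap (T x y : ℝ) :
    pd1 (pd1 (HT T)) (x, y) + pd2 (pd2 (HT T)) (x, y) =
      deriv (deriv prof) (Real.log (1 + x ^ 2 + y ^ 2) - T)
          * (4 * (x ^ 2 + y ^ 2) / (1 + x ^ 2 + y ^ 2) ^ 2)
        + deriv prof (Real.log (1 + x ^ 2 + y ^ 2) - T) * (4 / (1 + x ^ 2 + y ^ 2) ^ 2) := by
  have h := HT_contDiff T
  have r : ∀ x y : ℝ, 1 + x ^ 2 + y ^ 2 = (1 + y ^ 2) + x ^ 2 := fun x y => by ring
  have a1 : ∀ x y, pd1 (HT T) (x, y) = deriv prof (Real.log ((1 + y ^ 2) + x ^ 2) - T)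
      * (2 * x / ((1 + y ^ 2) + x ^ 2)) := by
    intro x y
    refine pd1_eq h ?_
    have := line_d prof_has T (1 + y ^ 2) x (by positivity)
    simpa only [HT, r] using this
  have a2 : ∀ x y, pd2 (HT T) (x, y) = deriv prof (Real.log ((1 + x ^ 2) + y ^ 2) - T)
      * (2 * y / ((1 + x ^ 2) + y ^ 2)) := by
    intro x y
    refine pd2_eq h ?_
    exact line_d prof_has T (1 + x ^ 2) y (by positivity)
  have b1 := pd1_eq (pd1_contDiff h) (x := x) (y := y) (by
    simp only [a1]
    exact (line_d prof_d_has T (1 + y ^ 2) x (by positivity)).mul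
      (line_q (1 + y ^ 2) x (by positivity)))
  have b2 := pd2_eq (pd2_contDiff h) (x := x) (y := y) (by
    simp only [a2]
    exact (line_d prof_d_has T (1 + x ^ 2) y (by positivity)).mul
      (line_q (1 + x ^ 2) y (by positivity)))
  rw [b1, b2, ← r x y]
  have hs := (spos x y).ne'
  field_simp
  ring

lemma HT_tsupport (T : ℝ) : tsupport (HT T) ⊆ {p | 1 + p.1 ^ 2 + p.2 ^ 2 ≤ Real.exp T} := by
  refine closure_minimal ?_ (isClosed_le (by fun_prop) continuous_const)
  intro p hp
  by_contra hh
  apply hp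
  simp only [Set.mem_ofPred_eq, not_le] at hh
  refine prof_high ?_
  have := (Real.lt_log_iff_exp_lt (spos p.1 p.2)).2 hh
  linarith

lemma HT_box (T : ℝ) : tsupport (HT T) ⊆
    (Set.Ioo (-Real.exp (T / 2)) (Real.exp (T / 2))) ×ˢ
      (Set.Ioo (-Real.exp (T / 2)) (Real.exp (T / 2))) := by
  intro p hp
  have h := HT_tsupport T hp
  simp only [Set.mem_ofPred_eq] at h
  have e : Real.exp T = Real.exp (T / 2) ^ 2 := by rw [← Real.exp_nat_mul]; congr 1; push_cast; ring
  rw [e] at h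
  have hp := Real.exp_pos (T / 2)
  have h1 : |p.1| < Real.exp (T / 2) := abs_lt_of_sq_lt_sq (by nlinarith [sq_nonneg p.2]) hp.le
  have h2 : |p.2| < Real.exp (T / 2) := abs_lt_of_sq_lt_sq (by nlinarith [sq_nonneg p.1]) hp.le
  exact ⟨abs_lt.1 h1, abs_lt.1 h2⟩

lemma HT_cs (T : ℝ) : HasCompactSupport (HT T) := by
  refine HasCompactSupport.of_support_subset_isCompact
    ((isCompact_Icc (a := -Real.exp (T / 2)) (b := Real.exp (T / 2))).prod
      (isCompact_Icc (a := -Real.exp (T / 2)) (b := Real.exp (T / 2)))) ?_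
  exact (subset_tsupport _).trans ((HT_box T).trans
    (Set.prod_mono Set.Ioo_subset_Icc_self Set.Ioo_subset_Icc_self))

lemma HT_zero {T : ℝ} (hT : 1 ≤ T) : HT T (0, 0) = T := by
  simp only [HT]
  norm_num
  rw [prof_low (by linarith)]; ring

lemma HT_lap_bound : ∃ C : ℝ, 0 < C ∧ ∀ T : ℝ,
    ∫ p, |pd1 (pd1 (HT T)) p + pd2 (pd2 (HT T)) p| ≤ C := by
  obtain ⟨C, hC, b1, b2⟩ := prof_bound
  have hI : Integrable (fun p : ℝ × ℝ => ((1 : ℝ) + ‖p‖ ^ 2) ^ (-(4 : ℝ) / 2)) :=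
    integrable_rpow_neg_one_add_norm_sq (by simp; norm_num)
  set I := ∫ p : ℝ × ℝ, ((1 : ℝ) + ‖p‖ ^ 2) ^ (-(4 : ℝ) / 2) with hIdef
  have hI0 : 0 ≤ I := integral_nonneg fun p => by positivity
  refine ⟨4 * C * I + 16 * C * Real.exp 1, by positivity, fun T => ?_⟩
  set R := Real.exp (T / 2) with hR
  have hR0 : 0 < R := Real.exp_pos _
  have e : Real.exp T = R ^ 2 := by rw [hR, ← Real.exp_nat_mul]; congr 1; push_cast; ring
  set B : Set (ℝ × ℝ) := Set.Icc (-R) R ×ˢ Set.Icc (-R) R with hB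
  have hBm : MeasurableSet B := measurableSet_Icc.prod measurableSet_Icc
  have vB : volume.real B = (2 * R) ^ 2 := by
    rw [Measure.volume_eq_prod, hB, measureReal_prod_prod, Real.volume_real_Icc_of_le (by linarith)]
    ring
  have vfin : volume B ≠ ⊤ := ((isCompact_Icc.prod isCompact_Icc).measure_lt_top).ne
  have hJ : Integrable (B.indicator fun _ : ℝ × ℝ => 4 * C * Real.exp 1 / R ^ 2) :=
    (integrable_indicator_iff hBm).2 (integrableOn_const vfin)
  have hsum : ∫ p : ℝ × ℝ, (4 * C * ((1 : ℝ) + ‖p‖ ^ 2) ^ (-(4 : ℝ) / 2)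
      + B.indicator (fun _ : ℝ × ℝ => 4 * C * Real.exp 1 / R ^ 2) p)
      = 4 * C * I + 16 * C * Real.exp 1 := by
    rw [integral_add (hI.const_mul _) hJ, integral_const_mul, ← hIdef, integral_indicator hBm,
      setIntegral_const, vB, smul_eq_mul]
    field_simp
    ring
  rw [← hsum]
  refine integral_mono_of_nonneg (Filter.Eventually.of_forall fun _ => abs_nonneg _)
    ((hI.const_mul _).add hJ) (Filter.Eventually.of_forall ?_)
  rintro ⟨x, y⟩
  simp only [HT_lap]
  have hs := spos x y
  have hn : ‖((x, y) : ℝ × ℝ)‖ ^ 2 ≤ x ^ 2 + y ^ 2 := by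
    rw [Prod.norm_mk]
    rcases max_choice ‖x‖ ‖y‖ with h | h <;> rw [h, Real.norm_eq_abs, sq_abs] <;> nlinarith [sq_nonneg x, sq_nonneg y]
  refine (abs_add_le _ _).trans ?_
  rw [add_comm]
  refine add_le_add ?_ ?_
  · rw [abs_mul, abs_of_pos (by positivity : 0 < 4 / (1 + x ^ 2 + y ^ 2) ^ 2)]
    have : ((1 : ℝ) + ‖((x, y) : ℝ × ℝ)‖ ^ 2) ^ (-(4 : ℝ) / 2)
        = 1 / ((1 : ℝ) + ‖((x, y) : ℝ × ℝ)‖ ^ 2) ^ 2 := by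
      rw [show (-(4 : ℝ) / 2) = -((2 : ℕ) : ℝ) by norm_num, Real.rpow_neg (by positivity),
        Real.rpow_natCast, one_div]
    rw [this]
    calc _ ≤ C * (4 / (1 + x ^ 2 + y ^ 2) ^ 2) := by gcongr; exact b1 _
      _ = 4 * C * (1 / (1 + x ^ 2 + y ^ 2) ^ 2) := by ring
      _ ≤ _ := by
        have hle : (1 : ℝ) + ‖((x, y) : ℝ × ℝ)‖ ^ 2 ≤ 1 + x ^ 2 + y ^ 2 := by linarith
        refine mul_le_mul_of_nonneg_left (one_div_le_one_div_of_le (by positivity) ?_)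
          (by positivity)
        exact pow_le_pow_left₀ (by positivity) hle 2
  · have hi : 0 ≤ B.indicator (fun _ : ℝ × ℝ => 4 * C * Real.exp 1 / R ^ 2) (x, y) :=
      Set.indicator_nonneg (fun _ _ => by positivity) _
    rcases lt_or_ge (Real.log (1 + x ^ 2 + y ^ 2) - T) (-1) with h | h
    · rw [prof_dd_low h]; simpa using hi
    rcases lt_or_ge 0 (Real.log (1 + x ^ 2 + y ^ 2) - T) with h' | h'
    · rw [prof_dd_high h']; simpa using hi
    have u1 : 1 + x ^ 2 + y ^ 2 ≤ R ^ 2 := by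
      rw [← e]; exact (Real.log_le_iff_le_exp hs).1 (by linarith)
    have u2 : R ^ 2 / Real.exp 1 ≤ 1 + x ^ 2 + y ^ 2 := by
      rw [← e, ← Real.exp_sub]; exact (Real.le_log_iff_exp_le hs).1 (by linarith)
    have mem : (x, y) ∈ B := by
      refine ⟨abs_le.1 (abs_le_of_sq_le_sq ?_ hR0.le), abs_le.1 (abs_le_of_sq_le_sq ?_ hR0.le)⟩ <;>
      simp only <;> nlinarith [sq_nonneg x, sq_nonneg y]
    rw [Set.indicator_of_mem mem, abs_mul, abs_of_nonneg (by positivity :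
      0 ≤ 4 * (x ^ 2 + y ^ 2) / (1 + x ^ 2 + y ^ 2) ^ 2)]
    calc _ ≤ C * (4 * (1 + x ^ 2 + y ^ 2) / (1 + x ^ 2 + y ^ 2) ^ 2) := by
            gcongr
            · exact b2 _
            · linarith
      _ = 4 * C / (1 + x ^ 2 + y ^ 2) := by field_simp
      _ ≤ 4 * C / (R ^ 2 / Real.exp 1) := by gcongr
      _ = _ := by field_simp

/-! ### Tiling -/

/-- The affine map sending the cell number `c` of the `N × N` grid of `[0,1]²` to `[-R,R]²`. -/
def cellMap (R : ℝ) (N : ℕ) (c : ℕ × ℕ) (p : ℝ × ℝ) : ℝ × ℝ :=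
  (2 * R * N) • p - (2 * R * c.1 + R, 2 * R * c.2 + R)

/-- Superposition of `N²` rescaled copies of `g`. -/
def tile (R : ℝ) (N : ℕ) (g : ℝ × ℝ → ℝ) (p : ℝ × ℝ) : ℝ :=
  ∑ c ∈ Finset.range N ×ˢ Finset.range N, g (cellMap R N c p)

/-- `g` vanishes off the open box. -/
def InBox (R : ℝ) (g : ℝ × ℝ → ℝ) : Prop :=
  ∀ p : ℝ × ℝ, g p ≠ 0 → (-R < p.1 ∧ p.1 < R) ∧ (-R < p.2 ∧ p.2 < R)

lemma cell_coord {R : ℝ} (hR : 0 < R) {N c : ℕ} {x : ℝ}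
    (h1 : -R < 2 * R * N * x - (2 * R * c + R)) (h2 : 2 * R * N * x - (2 * R * c + R) < R) :
    (c : ℝ) < N * x ∧ N * x < c + 1 := by
  constructor
  · by_contra h
    push Not at h
    nlinarith
  · by_contra h
    push Not at h
    nlinarith

lemma cell_unique_coord {c d : ℕ} {z : ℝ} (h1 : (c : ℝ) < z ∧ z < c + 1)
    (h2 : (d : ℝ) < z ∧ z < d + 1) : c = d := by
  have a : (c : ℝ) < (d : ℝ) + 1 := by linarith [h1.1, h2.2]
  have b : (d : ℝ) < (c : ℝ) + 1 := by linarith [h2.1, h1.2]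
  have a' : c < d + 1 := by exact_mod_cast a
  have b' : d < c + 1 := by exact_mod_cast b
  omega

lemma cell_mem {R : ℝ} (hR : 0 < R) {N : ℕ} {c : ℕ × ℕ} {p : ℝ × ℝ} {g : ℝ × ℝ → ℝ}
    (hg : InBox R g) (h : g (cellMap R N c p) ≠ 0) :
    ((c.1 : ℝ) < N * p.1 ∧ N * p.1 < c.1 + 1) ∧ ((c.2 : ℝ) < N * p.2 ∧ N * p.2 < c.2 + 1) := by
  have := hg _ h
  simp only [cellMap, Prod.fst_sub, Prod.snd_sub, Prod.smul_fst, Prod.smul_snd, smul_eq_mul] at this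
  exact ⟨cell_coord hR this.1.1 this.1.2, cell_coord hR this.2.1 this.2.2⟩

lemma tile_alt {R : ℝ} (hR : 0 < R) {N : ℕ} {g : ℝ × ℝ → ℝ} (hg : InBox R g) (p : ℝ × ℝ) :
    (∀ c ∈ Finset.range N ×ˢ Finset.range N, g (cellMap R N c p) = 0) ∨
    ∃ c ∈ Finset.range N ×ˢ Finset.range N, ∀ d ∈ Finset.range N ×ˢ Finset.range N,
      d ≠ c → g (cellMap R N d p) = 0 := by
  by_cases h : ∀ c ∈ Finset.range N ×ˢ Finset.range N, g (cellMap R N c p) = 0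
  · exact Or.inl h
  · push Not at h
    obtain ⟨c, hc, hne⟩ := h
    refine Or.inr ⟨c, hc, fun d _ hd => ?_⟩
    by_contra hne'
    apply hd
    have a := cell_mem hR hg hne
    have b := cell_mem hR hg hne'
    exact Prod.ext (cell_unique_coord b.1 a.1) (cell_unique_coord b.2 a.2)

lemma tile_abs {R : ℝ} (hR : 0 < R) {N : ℕ} {g : ℝ × ℝ → ℝ} (hg : InBox R g) (p : ℝ × ℝ) :
    |tile R N g p| = tile R N (fun q => |g q|) p := by
  unfold tile
  rcases tile_alt hR (N := N) hg p with h | ⟨c, hc, h⟩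
  · rw [Finset.sum_eq_zero h, Finset.sum_eq_zero]
    · simp
    · intro c hc; simp [h c hc]
  · rw [Finset.sum_eq_single_of_mem c hc h, Finset.sum_eq_single_of_mem c hc]
    intro d hd hdc; simp [h d hd hdc]

lemma tile_bound {R : ℝ} (hR : 0 < R) {N : ℕ} {g : ℝ × ℝ → ℝ} (hg : InBox R g) {M : ℝ}
    (hM : ∀ q, |g q| ≤ M) (p : ℝ × ℝ) : |tile R N g p| ≤ M := by
  unfold tile
  rcases tile_alt hR (N := N) hg p with h | ⟨c, hc, h⟩
  · rw [Finset.sum_eq_zero h]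
    simpa using (abs_nonneg _).trans (hM 0)
  · rw [Finset.sum_eq_single_of_mem c hc h]
    exact hM _

lemma tile_supp {R : ℝ} (hR : 0 < R) {N : ℕ} {g : ℝ × ℝ → ℝ} (hg : InBox R g) :
    tsupport (tile R N g) ⊆ Set.Icc ((0 : ℝ), (0 : ℝ)) (1, 1) := by
  refine closure_minimal ?_ isClosed_Icc
  intro p hp
  obtain ⟨c, hc, hne⟩ := Finset.exists_ne_zero_of_sum_ne_zero hp
  have a := cell_mem hR hg hne
  simp only [Finset.mem_product, Finset.mem_range] at hc
  have hN : (0 : ℝ) < N := by exact_mod_cast (Nat.zero_le _).trans_lt hc.1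
  have key : ∀ (k : ℕ) (x : ℝ), k < N → (k : ℝ) < N * x ∧ N * x < k + 1 → 0 ≤ x ∧ x ≤ 1 := by
    intro k x hk h
    have hk0 : (0 : ℝ) ≤ k := by positivity
    have hk1 : (k : ℝ) + 1 ≤ N := by exact_mod_cast hk
    constructor
    · by_contra hx
      push Not at hx
      nlinarith [h.1]
    · by_contra hx
      push Not at hx
      nlinarith [h.2]
  have k1 := key _ _ hc.1 a.1
  have k2 := key _ _ hc.2 a.2
  exact ⟨⟨k1.1, k2.1⟩, ⟨k1.2, k2.2⟩⟩

lemma tile_contDiff (R : ℝ) (N : ℕ) {g : ℝ × ℝ → ℝ} (hg : ContDiff ℝ (⊤ : ℕ∞) g) :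
    ContDiff ℝ (⊤ : ℕ∞) (tile R N g) := by
  unfold tile
  refine ContDiff.sum fun c _ => hg.comp ?_
  exact (contDiff_id.const_smul _).sub contDiff_const

lemma tile_fderiv (R : ℝ) (N : ℕ) {g : ℝ × ℝ → ℝ} (hg : Differentiable ℝ g) (p v : ℝ × ℝ) :
    fderiv ℝ (tile R N g) p v = 2 * R * N * tile R N (fun q => fderiv ℝ g q v) p := by
  have h : HasFDerivAt (tile R N g) (∑ c ∈ Finset.range N ×ˢ Finset.range N,
      (fderiv ℝ g (cellMap R N c p)).comp
        ((2 * R * N) • ContinuousLinearMap.id ℝ (ℝ × ℝ))) p := by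
    unfold tile
    refine HasFDerivAt.fun_sum fun c _ => ?_
    refine HasFDerivAt.comp p (hg _).hasFDerivAt ?_
    exact ((hasFDerivAt_id p).const_smul (2 * R * N)).sub_const _
  rw [h.fderiv]
  simp [tile, Finset.mul_sum]

lemma tile_integral {R : ℝ} (hR : 0 < R) {N : ℕ} (hN : 0 < N) {g : ℝ × ℝ → ℝ}
    (hg : Integrable g) :
    ∫ p, tile R N g p = (N : ℝ) ^ 2 / (2 * R * N) ^ 2 * ∫ p, g p := by
  have hμ : (2 * R * N : ℝ) ≠ 0 := by positivity
  unfold tile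
  rw [integral_finsetSum]
  · have : ∀ c ∈ Finset.range N ×ˢ Finset.range N, ∫ p, g (cellMap R N c p)
        = ((2 * R * N) ^ 2)⁻¹ * ∫ p, g p := by
      intro c _
      unfold cellMap
      rw [Measure.integral_comp_smul volume
        (fun q => g (q - (2 * R * c.1 + R, 2 * R * c.2 + R))) (2 * R * N),
        integral_sub_right_eq_self g, abs_of_nonneg (by positivity)]
      simp
    rw [Finset.sum_congr rfl this]
    simp
    ring
  · intro c _
    unfold cellMap
    exact (hg.comp_sub_right (2 * R * c.1 + R, 2 * R * c.2 + R)).comp_smul hμ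

lemma inBox_of_tsupport {R : ℝ} {f : ℝ × ℝ → ℝ}
    (h : tsupport f ⊆ Set.Ioo (-R) R ×ˢ Set.Ioo (-R) R) : InBox R f :=
  fun _ hp => h (subset_tsupport _ hp)

lemma pd1_tile (R : ℝ) (N : ℕ) {g : ℝ × ℝ → ℝ} (hg : ContDiff ℝ (⊤ : ℕ∞) g) (a : ℝ) :
    pd1 (fun p => a * tile R N g p) = fun p => (a * (2 * R * N)) * tile R N (pd1 g) p := by
  funext p
  unfold pd1
  rw [fderiv_const_mul (smooth_diff (tile_contDiff R N hg) p)]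
  simp only [smul_apply, smul_eq_mul]
  rw [tile_fderiv R N (smooth_diff hg)]
  ring

lemma pd2_tile (R : ℝ) (N : ℕ) {g : ℝ × ℝ → ℝ} (hg : ContDiff ℝ (⊤ : ℕ∞) g) (a : ℝ) :
    pd2 (fun p => a * tile R N g p) = fun p => (a * (2 * R * N)) * tile R N (pd2 g) p := by
  funext p
  unfold pd2
  rw [fderiv_const_mul (smooth_diff (tile_contDiff R N hg) p)]
  simp only [smul_apply, smul_eq_mul]
  rw [tile_fderiv R N (smooth_diff hg)]
  ring

/-- Potentials with small gradient, small Laplacian and large mixed derivative. -/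
lemma exists_G {ε : ℝ} (hε : 0 < ε) : ∃ M : ℝ, 0 < M ∧ ∀ N : ℕ, 0 < N → ∃ G : ℝ × ℝ → ℝ,
    ContDiff ℝ (⊤ : ℕ∞) G ∧ tsupport G ⊆ Set.Icc ((0 : ℝ), (0 : ℝ)) (1, 1) ∧
    (∀ p, |pd1 G p| ≤ M / N) ∧
    (∫ p, |pd1 (pd1 G) p + pd2 (pd2 G) p|) ≤ ε ∧
    2 ≤ ∫ p, |pd2 (pd1 G) p| := by
  obtain ⟨C, hC, hlap⟩ := HT_lap_bound
  set T : ℝ := 1 + 2 * C / ε with hT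
  have hT1 : 1 ≤ T := by rw [hT]; have : 0 < 2 * C / ε := by positivity
                         linarith
  have hT0 : 0 < T := by linarith
  set R := Real.exp (T / 2) with hRdef
  have hR : 0 < R := Real.exp_pos _
  set H := HT T with hH
  have sH : ContDiff ℝ (⊤ : ℕ∞) H := HT_contDiff T
  have cH : HasCompactSupport H := HT_cs T
  have bH : tsupport H ⊆ Set.Ioo (-R) R ×ˢ Set.Ioo (-R) R := HT_box T
  have s1 := pd1_contDiff sH
  have s2 := pd2_contDiff sH
  obtain ⟨M0, hM0⟩ := s1.continuous.bounded_above_of_compact_support (pd1_cs cH)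
  simp only [Real.norm_eq_abs] at hM0
  have hM00 : 0 ≤ M0 := (abs_nonneg _).trans (hM0 0)
  have hlow : T ≤ ∫ p, |pd2 (pd1 H) p| := by
    have := mixed_lower sH cH hR (by
      intro p hp hmem
      have hb := bH hmem
      rcases hp with hp | hp
      · exact absurd hb.1.2 (not_lt.2 hp)
      · exact absurd hb.2.2 (not_lt.2 hp))
    rw [hH, HT_zero hT1, abs_of_pos hT0] at this
    exact this
  refine ⟨2 / T * (2 * R) * (M0 + 1), by positivity, fun N hN => ?_⟩
  have hN' : (0 : ℝ) < N := by exact_mod_cast hN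
  set a : ℝ := 2 / T / N ^ 2 with ha
  have ha0 : 0 < a := by positivity
  have e1 := pd1_tile R N sH a
  have e11 := (congrArg pd1 e1).trans (pd1_tile R N s1 (a * (2 * R * N)))
  have e21 := (congrArg pd2 e1).trans (pd2_tile R N s1 (a * (2 * R * N)))
  have e22 := (congrArg pd2 (pd2_tile R N sH a)).trans (pd2_tile R N s2 (a * (2 * R * N)))
  have box1 : InBox R (pd1 H) := inBox_of_tsupport ((pd1_tsupport H).trans bH)
  have box21 : InBox R (pd2 (pd1 H)) :=
    inBox_of_tsupport ((pd2_tsupport _).trans ((pd1_tsupport H).trans bH))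
  have box11 : InBox R (pd1 (pd1 H)) :=
    inBox_of_tsupport ((pd1_tsupport _).trans ((pd1_tsupport H).trans bH))
  have box22 : InBox R (pd2 (pd2 H)) :=
    inBox_of_tsupport ((pd2_tsupport _).trans ((pd2_tsupport H).trans bH))
  have boxl : InBox R (fun p => pd1 (pd1 H) p + pd2 (pd2 H) p) := by
    intro p hp
    by_cases h : pd1 (pd1 H) p = 0
    · refine box22 p fun h' => hp ?_
      simp [h, h']
    · exact box11 p h
  have i11 : Integrable (pd1 (pd1 H)) :=
    (pd1_contDiff s1).continuous.integrable_of_hasCompactSupport (pd1_cs (pd1_cs cH))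
  have i22 : Integrable (pd2 (pd2 H)) :=
    (pd2_contDiff s2).continuous.integrable_of_hasCompactSupport (pd2_cs (pd2_cs cH))
  have i21 : Integrable (pd2 (pd1 H)) :=
    (pd2_contDiff s1).continuous.integrable_of_hasCompactSupport (pd2_cs (pd1_cs cH))
  have hcoef : ∀ J : ℝ, a * (2 * R * N) * (2 * R * N) * ((N : ℝ) ^ 2 / (2 * R * N) ^ 2 * J)
      = 2 / T * J := by
    intro J
    rw [ha]
    field_simp
  have hpos : 0 ≤ a * (2 * R * N) * (2 * R * N) := by positivity
  refine ⟨fun p => a * tile R N H p, contDiff_const.mul (tile_contDiff R N sH), ?_, ?_, ?_, ?_⟩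
  · refine Set.Subset.trans ?_ (tile_supp hR (N := N) (inBox_of_tsupport bH))
    exact closure_mono fun p hp h => hp (by simp only [h, mul_zero])
  · intro p
    rw [e1, abs_mul, abs_of_nonneg (by positivity)]
    calc _ ≤ a * (2 * R * N) * (M0 + 1) := by
            gcongr
            exact tile_bound hR box1 (fun q => (hM0 q).trans (by linarith)) p
      _ = _ := by rw [ha]; field_simp
  · have : ∀ p, |pd1 (pd1 (fun p => a * tile R N H p)) p + pd2 (pd2 (fun p => a * tile R N H p)) p|
        = a * (2 * R * N) * (2 * R * N)
          * tile R N (fun q => |pd1 (pd1 H) q + pd2 (pd2 H) q|) p := by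
      intro p
      rw [e11, e22, ← mul_add, abs_mul, abs_of_nonneg hpos, ← tile_abs hR boxl]
      simp only [tile, Finset.sum_add_distrib]
    simp_rw [this]
    rw [integral_const_mul, tile_integral hR hN
      (g := fun q => |pd1 (pd1 H) q + pd2 (pd2 H) q|) (i11.add i22).abs, hcoef]
    calc _ ≤ 2 / T * C := by gcongr; exact hlap T
      _ ≤ ε := by
        rw [div_mul_eq_mul_div, div_le_iff₀ hT0, hT]
        field_simp
        linarith
  · have : ∀ p, |pd2 (pd1 (fun p => a * tile R N H p)) p|
        = a * (2 * R * N) * (2 * R * N) * tile R N (fun q => |pd2 (pd1 H) q|) p := by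
      intro p
      rw [e21, abs_mul, abs_of_nonneg hpos, ← tile_abs hR box21]
    simp_rw [this]
    rw [integral_const_mul, tile_integral hR hN i21.abs, hcoef]
    calc (2 : ℝ) = 2 / T * T := by field_simp
      _ ≤ _ := by gcongr

/-! ### The cutoff and the conclusion -/

lemma emag_le (a b : ℝ) : emag (a, b) ≤ |a| + |b| := by
  unfold emag
  refine Real.sqrt_le_iff.2 ⟨by positivity, ?_⟩
  simp only
  nlinarith [sq_abs a, sq_abs b, mul_nonneg (abs_nonneg a) (abs_nonneg b)]

lemma le_emag (a b : ℝ) : |b| ≤ emag (a, b) := by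
  unfold emag
  refine Real.abs_le_sqrt ?_
  simp only
  nlinarith [sq_nonneg a]

lemma emag_cont : Continuous emag := by
  unfold emag
  fun_prop

lemma exists_cutoff : ∃ χ : ℝ × ℝ → ℝ, ContDiff ℝ (⊤ : ℕ∞) χ ∧
    tsupport χ ⊆ Set.Icc ((-2 : ℝ), (-2 : ℝ)) (2, 2) ∧ (∀ p, 0 ≤ χ p) ∧ (∀ p, χ p ≤ 1) ∧
    (∀ p ∈ Set.Icc ((0 : ℝ), (0 : ℝ)) (1, 1), χ p = 1) := by
  have hs : ContDiff ℝ (⊤ : ℕ∞) Real.smoothTransition := Real.smoothTransition.contDiff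
  let β : ℝ → ℝ := fun t => Real.smoothTransition (t + 2) * Real.smoothTransition (2 - t)
  have hβ : ContDiff ℝ (⊤ : ℕ∞) β := by
    refine (hs.comp ?_).mul (hs.comp ?_) <;> fun_prop
  have β0 : ∀ t, 0 ≤ β t := fun t =>
    mul_nonneg (Real.smoothTransition.nonneg _) (Real.smoothTransition.nonneg _)
  have β1 : ∀ t, β t ≤ 1 := fun t => mul_le_one₀ (Real.smoothTransition.le_one _)
    (Real.smoothTransition.nonneg _) (Real.smoothTransition.le_one _)
  have βs : ∀ t, β t ≠ 0 → -2 ≤ t ∧ t ≤ 2 := by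
    intro t ht
    constructor
    · by_contra h
      push Not at h
      exact ht (by simp only [β]; rw [Real.smoothTransition.zero_of_nonpos (by linarith), zero_mul])
    · by_contra h
      push Not at h
      exact ht (by
        simp only [β]
        rw [Real.smoothTransition.zero_of_nonpos (x := 2 - t) (by linarith), mul_zero])
  have βe : ∀ t, 0 ≤ t → t ≤ 1 → β t = 1 := by
    intro t h0 h1
    simp only [β]
    rw [Real.smoothTransition.one_of_one_le (by linarith),
      Real.smoothTransition.one_of_one_le (by linarith), mul_one]
  refine ⟨fun p => β p.1 * β p.2, ?_, ?_, ?_, ?_, ?_⟩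
  · exact (hβ.comp contDiff_fst).mul (hβ.comp contDiff_snd)
  · refine closure_minimal ?_ isClosed_Icc
    intro p hp
    have h1 := βs _ (left_ne_zero_of_mul hp)
    have h2 := βs _ (right_ne_zero_of_mul hp)
    exact ⟨⟨h1.1, h2.1⟩, ⟨h1.2, h2.2⟩⟩
  · exact fun p => mul_nonneg (β0 _) (β0 _)
  · exact fun p => mul_le_one₀ (β1 _) (β0 _) (β1 _)
  · intro p hp
    simp only
    rw [βe _ hp.1.1 hp.2.1, βe _ hp.1.2 hp.2.2, mul_one]

/-- For every `n ≥ 1` there exist a nonnegative `w_n ∈ C_0^∞(ℝ²)` and a `C^∞` vector field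
`u_n`, both supported in `[-2,2]²`, such that `Δ w_n = div u_n` in the sense of
distributions (`∫ w_n Δφ = -∫ ⟨u_n, ∇φ⟩` for all test `φ`), `‖w_n‖_∞ ≤ 2/n`,
`‖u_n‖_{L¹} ≤ 3/n`, and `∫ |∇w_n| dx ≥ 1`. -/
theorem small_sup_small_divergence_large_gradient (n : ℕ) (hn : 0 < n) :
    ∃ (w : ℝ × ℝ → ℝ) (u : ℝ × ℝ → ℝ × ℝ),
      ContDiff ℝ (⊤ : ℕ∞) w ∧ HasCompactSupport w ∧
      tsupport w ⊆ Set.Icc ((-2 : ℝ), (-2 : ℝ)) (2, 2) ∧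
      (∀ p, 0 ≤ w p) ∧
      ContDiff ℝ (⊤ : ℕ∞) u ∧ HasCompactSupport u ∧
      tsupport u ⊆ Set.Icc ((-2 : ℝ), (-2 : ℝ)) (2, 2) ∧
      (∀ φ : ℝ × ℝ → ℝ, IsTest φ →
        ∫ p, w p * (pd1 (pd1 φ) p + pd2 (pd2 φ) p) = - ∫ p, fderiv ℝ φ p (u p)) ∧
      (∀ p, |w p| ≤ 2 / n) ∧
      (∫ p, emag (u p)) ≤ 3 / n ∧
      (∫ p, emag (pd1 w p, pd2 w p)) ≥ 1 := by
  have hn' : (0 : ℝ) < n := by exact_mod_cast hn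
  have hn1 : (1 : ℝ) / n ≤ 1 := by
    rw [div_le_one hn']; exact_mod_cast hn
  obtain ⟨χ, sχ, tχ, χ0, χ1, χe⟩ := exists_cutoff
  obtain ⟨M, hM, hG⟩ := exists_G (ε := 1 / n) (by positivity)
  have cχ : HasCompactSupport χ :=
    isCompact_Icc.of_isClosed_subset (isClosed_tsupport _) tχ
  have iχ1 : Integrable (pd1 χ) :=
    (pd1_contDiff sχ).continuous.integrable_of_hasCompactSupport (pd1_cs cχ)
  have iχ2 : Integrable (pd2 χ) :=
    (pd2_contDiff sχ).continuous.integrable_of_hasCompactSupport (pd2_cs cχ)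
  set D1 := ∫ p, |pd1 χ p| with hD1
  set D2 := ∫ p, |pd2 χ p| with hD2
  have D10 : 0 ≤ D1 := integral_nonneg fun _ => abs_nonneg _
  have D20 : 0 ≤ D2 := integral_nonneg fun _ => abs_nonneg _
  obtain ⟨N, hN⟩ := exists_nat_gt (M * (1 + D1 + D2) * n)
  have hN0 : (0 : ℝ) < N := lt_of_le_of_lt (by positivity) hN
  have hNpos : 0 < N := by exact_mod_cast hN0
  obtain ⟨G, sG, tG, bG, lG, mG⟩ := hG N hNpos
  set δ := M / N with hδ
  have δ0 : 0 < δ := by positivity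
  have δD : δ * (1 + D1 + D2) ≤ 1 / n := by
    rw [hδ, div_mul_eq_mul_div, div_le_div_iff₀ hN0 hn']
    linarith
  have δ1 : δ ≤ 1 / n := by nlinarith
  have sub : Set.Icc ((0 : ℝ), (0 : ℝ)) (1, 1) ⊆ Set.Icc ((-2 : ℝ), (-2 : ℝ)) (2, 2) :=
    Set.Icc_subset_Icc (by constructor <;> norm_num) (by constructor <;> norm_num)
  have tG2 : tsupport G ⊆ Set.Icc ((-2 : ℝ), (-2 : ℝ)) (2, 2) := tG.trans sub
  have cG : HasCompactSupport G :=
    isCompact_Icc.of_isClosed_subset (isClosed_tsupport _) tG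
  let K : ℝ × ℝ → ℝ := fun p => δ * χ p
  have sK : ContDiff ℝ (⊤ : ℕ∞) K := contDiff_const.mul sχ
  have cK : HasCompactSupport K := cχ.mul_left
  have tK : tsupport K ⊆ Set.Icc ((-2 : ℝ), (-2 : ℝ)) (2, 2) := by
    refine Set.Subset.trans ?_ tχ
    exact closure_mono fun p hp h => hp (by simp only [K, h, mul_zero])
  have K1 : ∀ p, pd1 K p = δ * pd1 χ p := by
    intro p
    simp only [pd1, K]
    rw [fderiv_const_mul (smooth_diff sχ p)]; simp
  have K2 : ∀ p, pd2 K p = δ * pd2 χ p := by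
    intro p
    simp only [pd2, K]
    rw [fderiv_const_mul (smooth_diff sχ p)]; simp
  have sG1 := pd1_contDiff sG
  have sG2 := pd2_contDiff sG
  let w : ℝ × ℝ → ℝ := fun p => pd1 G p + K p
  let u : ℝ × ℝ → ℝ × ℝ := fun p =>
    (pd1 (pd1 G) p + pd2 (pd2 G) p + pd1 K p, pd2 K p)
  have sw : ContDiff ℝ (⊤ : ℕ∞) w := sG1.add sK
  have su : ContDiff ℝ (⊤ : ℕ∞) u :=
    (((pd1_contDiff sG1).add (pd2_contDiff sG2)).add (pd1_contDiff sK)).prodMk (pd2_contDiff sK)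
  have zero_of : ∀ f : ℝ × ℝ → ℝ, tsupport f ⊆ Set.Icc ((-2 : ℝ), (-2 : ℝ)) (2, 2) →
      ∀ p ∉ Set.Icc ((-2 : ℝ), (-2 : ℝ)) (2, 2), f p = 0 :=
    fun f hf p hp => image_eq_zero_of_notMem_tsupport fun h => hp (hf h)
  have tw : tsupport w ⊆ Set.Icc ((-2 : ℝ), (-2 : ℝ)) (2, 2) := by
    refine closure_minimal (fun p hp => ?_) isClosed_Icc
    by_contra h
    apply hp
    simp only [w]
    rw [zero_of _ ((pd1_tsupport G).trans tG2) p h, zero_of _ tK p h, add_zero]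
  have tu : tsupport u ⊆ Set.Icc ((-2 : ℝ), (-2 : ℝ)) (2, 2) := by
    refine closure_minimal (fun p hp => ?_) isClosed_Icc
    by_contra h
    apply hp
    simp only [u]
    rw [zero_of _ ((pd1_tsupport _).trans ((pd1_tsupport G).trans tG2)) p h,
      zero_of _ ((pd2_tsupport _).trans ((pd2_tsupport G).trans tG2)) p h,
      zero_of _ ((pd1_tsupport K).trans tK) p h, zero_of _ ((pd2_tsupport K).trans tK) p h]
    simp
  have cw : HasCompactSupport w :=
    isCompact_Icc.of_isClosed_subset (isClosed_tsupport _) tw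
  have cu : HasCompactSupport u :=
    isCompact_Icc.of_isClosed_subset (isClosed_tsupport _) tu
  have w2 : ∀ p, pd2 w p = pd2 (pd1 G) p + δ * pd2 χ p := by
    intro p
    rw [← K2]
    simp only [pd2, w]
    rw [fderiv_fun_add (smooth_diff sG1 p) (smooth_diff sK p)]; rfl
  refine ⟨w, u, sw, cw, tw, ?_, su, cu, tu, ?_, ?_, ?_, ?_⟩
  · intro p
    simp only [w, K]
    by_cases h : p ∈ Set.Icc ((0 : ℝ), (0 : ℝ)) (1, 1)
    · rw [χe p h]
      have := (abs_le.1 (bG p)).1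
      linarith
    · have : pd1 G p = 0 :=
        image_eq_zero_of_notMem_tsupport fun h' => h (tG (pd1_tsupport G h'))
      rw [this, zero_add]
      exact mul_nonneg δ0.le (χ0 p)
  · intro φ hφ
    exact weak_eq sG cG sK cK hφ.1
  · intro p
    simp only [w, K]
    refine (abs_add_le _ _).trans ?_
    rw [abs_of_nonneg (mul_nonneg δ0.le (χ0 p))]
    have h1 := bG p
    have h2 : δ * χ p ≤ δ * 1 := mul_le_mul_of_nonneg_left (χ1 p) δ0.le
    have : (2 : ℝ) / n = 1 / n + 1 / n := by ring
    linarith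
  · have iL : Integrable (fun p => |pd1 (pd1 G) p + pd2 (pd2 G) p|) :=
      (((pd1_contDiff sG1).continuous.integrable_of_hasCompactSupport (pd1_cs (pd1_cs cG))).add
        ((pd2_contDiff sG2).continuous.integrable_of_hasCompactSupport (pd2_cs (pd2_cs cG)))).abs
    have i1 : Integrable (fun p => δ * |pd1 χ p|) := iχ1.abs.const_mul δ
    have i2 : Integrable (fun p => δ * |pd2 χ p|) := iχ2.abs.const_mul δ
    have i3 : Integrable (fun p => |pd1 (pd1 G) p + pd2 (pd2 G) p| + δ * |pd1 χ p|) := iL.add i1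
    have hle : ∫ p, emag (u p) ≤
        ∫ p, (|pd1 (pd1 G) p + pd2 (pd2 G) p| + δ * |pd1 χ p| + δ * |pd2 χ p|) := by
      refine integral_mono_of_nonneg (Filter.Eventually.of_forall fun _ => Real.sqrt_nonneg _)
        (i3.add i2) (Filter.Eventually.of_forall fun p => ?_)
      refine (emag_le _ _).trans ?_
      rw [K1, K2]
      have e1 : |δ * pd1 χ p| = δ * |pd1 χ p| := by rw [abs_mul, abs_of_pos δ0]
      have e2 : |δ * pd2 χ p| = δ * |pd2 χ p| := by rw [abs_mul, abs_of_pos δ0]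
      rw [e2]
      have := abs_add_le (pd1 (pd1 G) p + pd2 (pd2 G) p) (δ * pd1 χ p)
      rw [e1] at this
      linarith
    rw [integral_add i3 i2, integral_add iL i1, integral_const_mul, integral_const_mul] at hle
    rw [← hD1, ← hD2] at hle
    have : (3 : ℝ) / n = 1 / n + 1 / n + 1 / n := by ring
    have : (0 : ℝ) < 1 / n := by positivity
    nlinarith
  · have iM : Integrable (fun p => |pd2 (pd1 G) p|) :=
      ((pd2_contDiff sG1).continuous.integrable_of_hasCompactSupport (pd2_cs (pd1_cs cG))).abs
    have i2 : Integrable (fun p => δ * |pd2 χ p|) := iχ2.abs.const_mul δ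
    have cont : Continuous (fun p => emag (pd1 w p, pd2 w p)) :=
      emag_cont.comp ((pd1_contDiff sw).continuous.prodMk (pd2_contDiff sw).continuous)
    have icomp : HasCompactSupport (fun p => emag (pd1 w p, pd2 w p)) := by
      refine HasCompactSupport.of_support_subset_isCompact
        (isCompact_Icc (a := ((-2 : ℝ), (-2 : ℝ))) (b := (2, 2))) fun p hp => ?_
      by_contra h
      apply hp
      simp only
      rw [zero_of _ ((pd1_tsupport w).trans tw) p h, zero_of _ ((pd2_tsupport w).trans tw) p h]
      simp [emag]
    have iw := cont.integrable_of_hasCompactSupport (μ := volume) icomp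
    have hle : ∫ p, (|pd2 (pd1 G) p| - δ * |pd2 χ p|) ≤ ∫ p, emag (pd1 w p, pd2 w p) := by
      refine integral_mono (iM.sub i2) iw fun p => ?_
      refine le_trans ?_ (le_emag _ _)
      rw [w2]
      have e2 : |δ * pd2 χ p| = δ * |pd2 χ p| := by rw [abs_mul, abs_of_pos δ0]
      have := abs_sub_abs_le_abs_sub (pd2 (pd1 G) p) (-(δ * pd2 χ p))
      rw [abs_neg, e2, sub_neg_eq_add] at this
      exact this
    rw [integral_sub iM i2, integral_const_mul, ← hD2] at hle
    nlinarith
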